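/- Let λ = (λ^0, …, λ^{l−1}) be an l-partition of n. Then the following identity holds in the rational function field ℚ(q, Q_0, …, Q_{l−1}): (−1)^{n(l−1)} (Q_0 Q_1 ⋯ Q_{l−1})^{−n} q^{−α(λ')} · ∏_{s=0}^{l−1} ∏_{(i,j)∈[λ^s]} Q_s [h_{i,j}^{λ^s,λ^s}]_q · ∏_{0≤s<t≤l−1} X(λ^s, λ^t; Q_s, Q_t) = (−1)^{n(l−1)} q^{−n(λ̄)} (q−1)^{−n} · ∏_{s=0}^{l−1} ∏_{(i,j)∈[λ^s]} ∏_{t=0}^{l−1} (q^{h_{i,j}^{λ^s,λ^t}} Q_s Q_t^{−1} − 1). (The left-hand side is Mathas's formula for the Schur element s_λ(q) of the Ariki–Koike algebra; the right-hand side is the cancellation-free formula.) -/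

import Mathlib

/-- A partition, encoded as a weakly decreasing, eventually-zero sequence of
natural numbers; `parts i` is the `(i+1)`-st part `λ_{i+1}` (0-indexed rows). -/
structure Ptn where
  parts : ℕ → ℕ
  antitone' : Antitone parts
  eventually_zero : ∃ N, ∀ i, N ≤ i → parts i = 0

namespace Ptn

/-- `conj p k` is the conjugate-partition part `λ'_{k+1} = #{i ≥ 1 : λ_i ≥ k+1}`. -/
noncomputable def conj (p : Ptn) (k : ℕ) : ℕ := Nat.card {i : ℕ // k < p.parts i}

/-- `|λ| = Σ_{i ≥ 1} λ_i`. -/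
noncomputable def size (p : Ptn) : ℕ := ∑ᶠ i, p.parts i

/-- `n(λ) = Σ_{i ≥ 1} (i-1) λ_i`. -/
noncomputable def nn (p : Ptn) : ℕ := ∑ᶠ i, i * p.parts i

/-- The empty partition. -/
def empty : Ptn := ⟨fun _ => 0, fun _ _ _ => le_rfl, ⟨0, fun _ _ => rfl⟩⟩

end Ptn

/-- The generalised hook length `h_{i,j}^{λ,μ} = λ_i - i + μ'_j - j + 1`, for the node
in (0-indexed) row `i` and column `j`, i.e. the 1-indexed node `(i+1, j+1)`. -/
noncomputable def ghook (lam mu : Ptn) (i j : ℕ) : ℤ :=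
  (lam.parts i : ℤ) - (i + 1) + (mu.conj j : ℤ) - (j + 1) + 1

/-- The quantity `X(λ, μ; Q_s, Q_t) = ∏_{(i,j)∈[μ]} (q^{j-i} Q_t - Q_s) ·
∏_{(i,j)∈[λ]} ( (q^{j-i} Q_s - q^{μ_1} Q_t) ·
∏_{k=1}^{μ_1} (q^{j-i} Q_s - q^{k-1-μ'_k} Q_t)/(q^{j-i} Q_s - q^{k-μ'_k} Q_t) )`. -/
noncomputable def Xst {K : Type*} [Field K] (q Qs Qt : K) (lam mu : Ptn) : K :=
  (∏ᶠ i, ∏ j ∈ Finset.range (mu.parts i), (q ^ ((j : ℤ) - (i : ℤ)) * Qt - Qs)) *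
  ∏ᶠ i, ∏ j ∈ Finset.range (lam.parts i),
    ((q ^ ((j : ℤ) - (i : ℤ)) * Qs - q ^ (mu.parts 0 : ℤ) * Qt) *
      ∏ k ∈ Finset.range (mu.parts 0),
        (q ^ ((j : ℤ) - (i : ℤ)) * Qs - q ^ (((k : ℤ) + 1) - 1 - (mu.conj k : ℤ)) * Qt) /
          (q ^ ((j : ℤ) - (i : ℤ)) * Qs - q ^ (((k : ℤ) + 1) - (mu.conj k : ℤ)) * Qt))

/-- The rational function field `ℚ(q, Q_0, …, Q_{l-1})`. -/
noncomputable abbrev KK (l : ℕ) : Type := FractionRing (MvPolynomial (Fin (l + 1)) ℚ)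

/-- The indeterminate `q` of `ℚ(q, Q_0, …, Q_{l-1})`. -/
noncomputable def qK (l : ℕ) : KK l :=
  algebraMap (MvPolynomial (Fin (l + 1)) ℚ) (KK l) (MvPolynomial.X 0)

/-- The indeterminate `Q_s` of `ℚ(q, Q_0, …, Q_{l-1})`. -/
noncomputable def QK (l : ℕ) (s : Fin l) : KK l :=
  algebraMap (MvPolynomial (Fin (l + 1)) ℚ) (KK l) (MvPolynomial.X s.succ)

/-- `α(λ') = (1/2) Σ_{s=0}^{l-1} Σ_{i≥1} (λ^{s'}_i - 1) λ^{s'}_i` (a natural number,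
since each inner sum is even). -/
noncomputable def alphaConj {l : ℕ} (Λ : Fin l → Ptn) : ℕ :=
  (∑ s, ∑ᶠ k, ((Λ s).conj k - 1) * (Λ s).conj k) / 2

/-!
Write `f m = q ^ m * Q_s - Q_t`. Up to a sign and a power of `q`, the factor `X(λ, μ; Q_s, Q_t)` is
the product of the values of `f` at the negated contents of `μ` and, for every node of `λ`, of a
product of ratios of values of `f` along the columns of `μ`. For a node of `λ` in column `b`, only
the columns `k < b` need to be traversed: by telescoping, the remaining part of the boundary of `μ`
may be traversed along its rows instead. Over a row of `λ`, the column parts telescope to the values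
of `f` at the hook lengths `h^{λ,μ}`; over a column of `λ`, the row parts telescope to the values at
`-h^{μ,λ}` divided by those at the negated contents of `μ`. Hence `X` is the product of the two
mixed families of hook factors, up to monomials in the parameters and a power of `q`; these
powers of `q` multiply to `q ^ (α(λ') - n(λ̄))`, because `α(λ')` is the sum of the `n(λ^s)`.
-/

open Finset

namespace Ptn

section Cells

theorem lt_conj_iff {p : Ptn} {i k : ℕ} : i < p.conj k ↔ k < p.parts i := by
  classical
  have hex : ∃ m, p.parts m ≤ k := by
    obtain ⟨N, hN⟩ := p.eventually_zero
    exact ⟨N, by simp [hN N le_rfl]⟩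
  have hparts (j : ℕ) : k < p.parts j ↔ j < Nat.find hex := by
    rw [Nat.lt_find_iff]
    exact ⟨fun h m hm => not_le.2 (h.trans_le (p.antitone' hm)), fun h => not_le.1 (h j le_rfl)⟩
  have hconj : p.conj k = Nat.find hex := by
    rw [conj, Nat.card_congr (Equiv.subtypeEquivRight hparts)]
    simpa using Nat.subtype_card (range (Nat.find hex)) fun _ => mem_range
  rw [hconj, hparts]

theorem antitone_conj (p : Ptn) : Antitone p.conj := fun _ _ hkl =>
  le_of_forall_lt fun _ hi => lt_conj_iff.2 (hkl.trans_lt (lt_conj_iff.1 hi))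

theorem conj_eq_zero_iff {p : Ptn} {k : ℕ} : p.conj k = 0 ↔ p.parts 0 ≤ k := by
  rw [← not_lt, ← lt_conj_iff, Nat.pos_iff_ne_zero, not_not]

/-- The set of nodes `[λ]` of a partition, as 0-indexed pairs (row, column). -/
noncomputable def cells (p : Ptn) : Finset (ℕ × ℕ) :=
  {c ∈ range (p.conj 0) ×ˢ range (p.parts 0) | c.2 < p.parts c.1}

theorem mem_cells {p : Ptn} {c : ℕ × ℕ} : c ∈ p.cells ↔ c.2 < p.parts c.1 := by
  simp only [cells, mem_filter, mem_product, mem_range, lt_conj_iff, and_iff_right_iff_imp]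
  exact fun h => ⟨(Nat.zero_le _).trans_lt h, h.trans_le (p.antitone' (Nat.zero_le _))⟩

variable {M : Type*} [CommMonoid M]

@[to_additive]
theorem prod_cells_eq_prod_rows (p : Ptn) (g : ℕ × ℕ → M) :
    ∏ c ∈ p.cells, g c = ∏ i ∈ range (p.conj 0), ∏ j ∈ range (p.parts i), g (i, j) := by
  refine prod_finset_product' _ _ _ (f := fun i j => g (i, j)) fun c => ?_
  simp only [mem_cells, mem_range, lt_conj_iff]
  omega

@[to_additive]
theorem prod_cells_eq_prod_columns (p : Ptn) {B : ℕ} (hB : p.parts 0 ≤ B) (g : ℕ × ℕ → M) :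
    ∏ c ∈ p.cells, g c = ∏ k ∈ range B, ∏ i ∈ range (p.conj k), g (i, k) := by
  refine prod_finset_product_right' _ _ _ (f := fun i j => g (i, j)) fun c => ?_
  simp only [mem_cells, mem_range, lt_conj_iff]
  have := p.antitone' (Nat.zero_le c.1)
  omega

@[to_additive]
theorem finprod_rows_eq_prod_cells (p : Ptn) (g : ℕ → ℕ → M) :
    ∏ᶠ i, ∏ j ∈ range (p.parts i), g i j = ∏ c ∈ p.cells, g c.1 c.2 := by
  rw [prod_cells_eq_prod_rows]
  refine finprod_eq_prod_of_mulSupport_subset _ fun i hi => ?_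
  rw [coe_range, Set.mem_Iio, lt_conj_iff]
  by_contra h
  exact hi (by simp [Nat.eq_zero_of_not_pos h])

@[to_additive]
theorem prod_cells_reflect (p : Ptn) (g : ℕ → ℕ → M) :
    ∏ c ∈ p.cells, g c.1 (p.parts c.1 - 1 - c.2) = ∏ c ∈ p.cells, g c.1 c.2 := by
  refine prod_nbij' (fun c => (c.1, p.parts c.1 - 1 - c.2)) (fun c => (c.1, p.parts c.1 - 1 - c.2))
    ?_ ?_ ?_ ?_ fun _ _ => rfl
  all_goals
    intro c hc
    simp only [mem_cells, Prod.ext_iff, true_and] at hc ⊢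
    omega

theorem prod_cells_prod_column_comm (p r : Ptn) (g : ℕ → ℕ → ℕ → M) :
    ∏ c ∈ p.cells, ∏ i ∈ range (r.conj c.2), g c.1 i c.2 =
      ∏ d ∈ r.cells, ∏ a ∈ range (p.conj d.2), g a d.1 d.2 := by
  rw [p.prod_cells_eq_prod_columns (le_max_left _ (r.parts 0)),
    r.prod_cells_eq_prod_columns (le_max_right (p.parts 0) _)]
  exact prod_congr rfl fun k _ => by dsimp only; exact prod_comm

theorem size_eq_card_cells (p : Ptn) : p.size = #p.cells := by
  simpa [size] using p.finsum_rows_eq_sum_cells fun _ _ => (1 : ℕ)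

theorem nn_eq_sum_choose (p : Ptn) {B : ℕ} (hB : p.parts 0 ≤ B) :
    p.nn = ∑ k ∈ range B, (p.conj k).choose 2 := by
  have hcells : p.nn = ∑ c ∈ p.cells, c.1 := by
    simpa [nn, mul_comm] using p.finsum_rows_eq_sum_cells fun i _ => i
  rw [hcells, p.sum_cells_eq_sum_columns hB]
  exact sum_congr rfl fun k _ => (sum_range_id _).trans (Nat.choose_two_right _).symm

/-- The pairing `Σ_k λ'_k μ'_k` of the conjugates of two partitions, written as a sum over the
nodes of `μ`. It is the cross term in the quadratic function `n` of the columns. -/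
noncomputable def conjDot (p r : Ptn) : ℕ := ∑ c ∈ r.cells, p.conj c.2

theorem conjDot_eq_sum_mul (p : Ptn) {r : Ptn} {B : ℕ} (hB : r.parts 0 ≤ B) :
    p.conjDot r = ∑ k ∈ range B, p.conj k * r.conj k := by
  rw [conjDot, r.sum_cells_eq_sum_columns hB]
  exact sum_congr rfl fun k _ => by simp [mul_comm]

theorem sum_ghook (p r : Ptn) :
    ∑ c ∈ p.cells, ghook p r c.1 c.2 = ∑ c ∈ p.cells, ((c.2 : ℤ) - c.1) + r.conjDot p := by
  rw [← p.sum_cells_reflect fun i j => (j : ℤ) - i, conjDot, Nat.cast_sum, ← sum_add_distrib]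
  refine sum_congr rfl fun c hc => ?_
  rw [mem_cells] at hc
  rw [ghook]
  omega

end Cells

section Telescoping

variable {G : Type*} [CommGroup G]

/-- The product of the values of `f` picked up along the boundary of the diagram of `r`, seen from
a node of content `c`: the columns to the left of column `b` are traversed one by one, and the rest
of the boundary is traversed along the rows meeting column `b`. -/
noncomputable def rimProd (f : ℤ → G) (r : Ptn) (c : ℤ) (b : ℕ) : G :=
  f (c - b + r.conj b) *
    (∏ k ∈ range b, f (c - k + r.conj k) / f (c - k - 1 + r.conj k)) *
    ∏ i ∈ range (r.conj b), f (c + i - r.parts i) / f (c + i + 1 - r.parts i)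

theorem rimProd_succ (f : ℤ → G) (r : Ptn) (c : ℤ) (b : ℕ) :
    rimProd f r c (b + 1) = rimProd f r c b := by
  have hle : r.conj (b + 1) ≤ r.conj b := r.antitone_conj b.le_succ
  -- The rows counted by `r.conj b` but not by `r.conj (b + 1)` have length exactly `b + 1`.
  have hrows : ∏ i ∈ Ico (r.conj (b + 1)) (r.conj b),
      f (c + i - r.parts i) / f (c + i + 1 - r.parts i) =
      f (c - b - 1 + r.conj (b + 1)) / f (c - b - 1 + r.conj b) := by
    rw [← inv_div, ← prod_Ico_div (fun i : ℕ => f (c - b - 1 + i)) hle, ← prod_inv_distrib]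
    refine prod_congr rfl fun i hi => ?_
    rw [mem_Ico, lt_conj_iff, ← not_lt, lt_conj_iff] at hi
    have hi : r.parts i = b + 1 := by omega
    rw [hi, inv_div]
    push_cast
    congr 2 <;> ring
  have hcorner : c - ((b + 1 : ℕ) : ℤ) + r.conj (b + 1) = c - b - 1 + r.conj (b + 1) := by
    push_cast; ring
  rw [rimProd, rimProd, ← prod_range_mul_prod_Ico _ hle, hrows, prod_range_succ, hcorner]
  simp only [div_eq_mul_inv]
  ac_rfl

theorem rimProd_eq_rimProd (f : ℤ → G) (r : Ptn) (c : ℤ) (b b' : ℕ) :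
    rimProd f r c b = rimProd f r c b' := by
  have h_zero (b : ℕ) : rimProd f r c b = rimProd f r c 0 := by
    induction b with
    | zero => rfl
    | succ b ih => rw [rimProd_succ, ih]
  rw [h_zero b, h_zero b']

theorem rimProd_parts_zero (f : ℤ → G) (r : Ptn) (c : ℤ) :
    rimProd f r c (r.parts 0) = f (c - r.parts 0) *
      ∏ k ∈ range (r.parts 0), f (c - k + r.conj k) / f (c - k - 1 + r.conj k) := by
  simp [rimProd, conj_eq_zero_iff.2 le_rfl]

theorem prod_range_column_part (f : ℤ → G) (r : Ptn) (a L : ℕ) :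
    ∏ b ∈ range L, (f ((b : ℤ) - a - b + r.conj b) *
      ∏ k ∈ range b, f ((b : ℤ) - a - k + r.conj k) / f ((b : ℤ) - a - k - 1 + r.conj k)) =
      ∏ k ∈ range L, f ((L : ℤ) - a - k - 1 + r.conj k) := by
  induction L with
  | zero => simp
  | succ L ih =>
    have hshift (k : ℕ) : ((L + 1 : ℕ) : ℤ) - a - k - 1 + r.conj k = L - a - k + r.conj k := by
      push_cast; ring
    rw [prod_range_succ, ih, prod_div_distrib, mul_left_comm, mul_div_cancel, prod_range_succ,
      mul_comm]
    simp only [hshift]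

theorem prod_cells_column_part (f : ℤ → G) (p r : Ptn) :
    ∏ c ∈ p.cells, (f ((c.2 : ℤ) - c.1 - c.2 + r.conj c.2) *
      ∏ k ∈ range c.2, f ((c.2 : ℤ) - c.1 - k + r.conj k) /
        f ((c.2 : ℤ) - c.1 - k - 1 + r.conj k)) = ∏ c ∈ p.cells, f (ghook p r c.1 c.2) := by
  simp only [prod_cells_eq_prod_rows, prod_range_column_part]
  refine prod_congr rfl fun a _ => prod_congr rfl fun k _ => ?_
  rw [ghook]
  congr 1
  ring

theorem prod_cells_row_part (f : ℤ → G) (p r : Ptn) :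
    ∏ c ∈ p.cells, ∏ i ∈ range (r.conj c.2),
      f ((c.2 : ℤ) - c.1 + i - r.parts i) / f ((c.2 : ℤ) - c.1 + i + 1 - r.parts i) =
      (∏ d ∈ r.cells, f (-ghook r p d.1 d.2)) / ∏ d ∈ r.cells, f (d.1 - d.2) := by
  rw [p.prod_cells_prod_column_comm r (fun a i k =>
      f ((k : ℤ) - a + i - r.parts i) / f ((k : ℤ) - a + i + 1 - r.parts i)),
    ← r.prod_cells_reflect (fun i k => f (i - k)), ← prod_div_distrib]
  refine prod_congr rfl fun d hd => ?_
  rw [mem_cells] at hd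
  have hhook : -ghook r p d.1 d.2 = d.2 - p.conj d.2 + d.1 + 1 - r.parts d.1 := by
    rw [ghook]; ring
  have hcontent : (d.1 : ℤ) - ((r.parts d.1 - 1 - d.2 : ℕ) : ℤ) =
      d.2 - (0 : ℕ) + d.1 + 1 - r.parts d.1 := by omega
  rw [hhook, hcontent,
    ← prod_range_div (fun a : ℕ => f ((d.2 : ℤ) - a + d.1 + 1 - r.parts d.1))]
  refine prod_congr rfl fun a _ => ?_
  congr 2
  push_cast
  ring

theorem prod_content_mul_prod_columns_eq_prod_ghook (f : ℤ → G) (p r : Ptn) :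
    (∏ c ∈ r.cells, f (c.1 - c.2)) *
      ∏ c ∈ p.cells, (f (c.2 - c.1 - r.parts 0) * ∏ k ∈ range (r.parts 0),
        f (c.2 - c.1 - k + r.conj k) / f (c.2 - c.1 - k - 1 + r.conj k)) =
    (∏ c ∈ p.cells, f (ghook p r c.1 c.2)) * ∏ c ∈ r.cells, f (-ghook r p c.1 c.2) := by
  have hrim : ∏ c ∈ p.cells, (f (c.2 - c.1 - r.parts 0) * ∏ k ∈ range (r.parts 0),
        f (c.2 - c.1 - k + r.conj k) / f (c.2 - c.1 - k - 1 + r.conj k)) =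
      ∏ c ∈ p.cells, rimProd f r (c.2 - c.1) c.2 :=
    prod_congr rfl fun c _ => by rw [← rimProd_parts_zero, rimProd_eq_rimProd]
  simp only [hrim, rimProd]
  rw [prod_mul_distrib, prod_cells_column_part, prod_cells_row_part, mul_left_comm,
    mul_div_cancel]

end Telescoping

end Ptn

section PairOfPartitions

variable {K : Type*} [Field K] {q x y : K}

theorem zpow_mul_sub_zpow_mul (hq : q ≠ 0) (x y : K) (m e : ℤ) :
    q ^ m * x - q ^ e * y = q ^ e * (q ^ (m - e) * x - y) := by
  rw [mul_sub, ← mul_assoc, ← zpow_add₀ hq, add_sub_cancel]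

theorem prod_zpow_mul_sub {ι : Type*} (hq : q ≠ 0) (x y : K) (s : Finset ι) (m : ι → ℤ) :
    ∏ i ∈ s, (q ^ m i * y - x) =
      (-1) ^ #s * q ^ (∑ i ∈ s, m i) * ∏ i ∈ s, (q ^ (-m i) * x - y) := by
  induction s using Finset.cons_induction with
  | empty => simp
  | cons i s hi ih =>
    have hneg : q ^ m i * y - x = -1 * q ^ m i * (q ^ (-m i) * x - y) := by
      simpa using congrArg Neg.neg (zpow_mul_sub_zpow_mul hq x y 0 (m i))
    rw [prod_cons, prod_cons, sum_cons, card_cons, ih, hneg, zpow_add₀ hq, pow_succ]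
    ring

theorem Xst_cell_factor (hq : q ≠ 0) (x y : K) (r : Ptn) (c : ℤ) :
    (q ^ c * x - q ^ (r.parts 0 : ℤ) * y) * ∏ k ∈ range (r.parts 0),
        (q ^ c * x - q ^ (((k : ℤ) + 1) - 1 - (r.conj k : ℤ)) * y) /
          (q ^ c * x - q ^ (((k : ℤ) + 1) - (r.conj k : ℤ)) * y) =
      (q ^ (c - r.parts 0) * x - y) * ∏ k ∈ range (r.parts 0),
        (q ^ (c - k + r.conj k) * x - y) / (q ^ (c - k - 1 + r.conj k) * x - y) := by
  have hcolumn (k : ℕ) :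
      (q ^ c * x - q ^ (((k : ℤ) + 1) - 1 - (r.conj k : ℤ)) * y) /
          (q ^ c * x - q ^ (((k : ℤ) + 1) - (r.conj k : ℤ)) * y) =
        q⁻¹ * ((q ^ (c - k + r.conj k) * x - y) / (q ^ (c - k - 1 + r.conj k) * x - y)) := by
    rw [zpow_mul_sub_zpow_mul hq, zpow_mul_sub_zpow_mul hq, mul_div_mul_comm, ← zpow_sub₀ hq,
      ← zpow_neg_one]
    ring_nf
  simp only [hcolumn]
  rw [prod_mul_distrib, prod_const, card_range, zpow_mul_sub_zpow_mul hq, zpow_natCast, inv_pow]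
  field_simp

theorem Xst_mul_pow_conjDot (hq : q ≠ 0) (hxy : ∀ m : ℤ, q ^ m * x ≠ y) (p r : Ptn) :
    Xst q x y p r * q ^ p.conjDot r =
      (∏ c ∈ p.cells, (q ^ ghook p r c.1 c.2 * x - y)) *
        ∏ c ∈ r.cells, (q ^ ghook r p c.1 c.2 * y - x) := by
  have htel := congrArg Units.val <| Ptn.prod_content_mul_prod_columns_eq_prod_ghook
    (fun m : ℤ => Units.mk0 (q ^ m * x - y) (sub_ne_zero.2 (hxy m))) p r
  simp only [Units.val_mul, Units.coe_prod, Units.val_div_eq_div_val, Units.val_mk0] at htel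
  rw [Xst, Ptn.finprod_rows_eq_prod_cells, Ptn.finprod_rows_eq_prod_cells]
  simp only [Xst_cell_factor hq, prod_zpow_mul_sub hq x y, neg_sub]
  rw [Ptn.sum_ghook, zpow_add₀ hq, zpow_natCast]
  linear_combination (-1) ^ #r.cells * q ^ (∑ c ∈ r.cells, ((c.2 : ℤ) - c.1)) *
    q ^ p.conjDot r * htel

/-- The factor of the cancellation-free formula attached to an ordered pair of components `p`, `r`
with parameters `x`, `y`. -/
noncomputable def hookProd (q x y : K) (p r : Ptn) : K :=
  ∏ c ∈ p.cells, (q ^ ghook p r c.1 c.2 * x * y⁻¹ - 1)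

theorem prod_zpow_ghook_mul_sub (q x : K) (hy : y ≠ 0) (p r : Ptn) :
    ∏ c ∈ p.cells, (q ^ ghook p r c.1 c.2 * x - y) = y ^ p.size * hookProd q x y p r := by
  rw [hookProd, p.size_eq_card_cells, ← prod_const, ← prod_mul_distrib]
  exact prod_congr rfl fun c _ => by field_simp

theorem Xst_mul_pow_eq_hookProd (hq : q ≠ 0) (hx : x ≠ 0) (hy : y ≠ 0)
    (hxy : ∀ m : ℤ, q ^ m * x ≠ y) (p r : Ptn) :
    Xst q x y p r * q ^ p.conjDot r =
      (y ^ p.size * x ^ r.size) * (hookProd q x y p r * hookProd q y x r p) := by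
  rw [Xst_mul_pow_conjDot hq hxy, prod_zpow_ghook_mul_sub q x hy, prod_zpow_ghook_mul_sub q y hx]
  ring

theorem prod_qint_ghook_mul_pow (hq : q ≠ 1) (hx : x ≠ 0) (p : Ptn) :
    (∏ c ∈ p.cells, x * ((q ^ ghook p p c.1 c.2 - 1) / (q - 1))) * (q - 1) ^ p.size =
      x ^ p.size * hookProd q x x p p := by
  have hq_sub : q - 1 ≠ 0 := sub_ne_zero.2 hq
  simp only [hookProd, p.size_eq_card_cells, ← prod_const, ← prod_mul_distrib]
  exact prod_congr rfl fun c _ => by field_simp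

end PairOfPartitions

section MultiPartitions

@[to_additive]
theorem prod_prod_eq_diag_mul_Ioi {ι M : Type*} [CommMonoid M] [LinearOrder ι] [Fintype ι]
    [LocallyFiniteOrderTop ι] [LocallyFiniteOrderBot ι] (g : ι → ι → M) :
    ∏ s, ∏ t, g s t = (∏ s, g s s) * ∏ s, ∏ t ∈ Ioi s, g s t * g t s := by
  rw [prod_prod_Ioi_mul_eq_prod_prod_off_diag (fun s t => g t s), ← prod_mul_distrib]
  exact prod_congr rfl fun s _ => Fintype.prod_eq_mul_prod_compl s _

theorem choose_two_sum {ι : Type*} [LinearOrder ι] [Fintype ι] [LocallyFiniteOrderTop ι]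
    [LocallyFiniteOrderBot ι] (x : ι → ℕ) :
    (∑ s, x s).choose 2 = ∑ s, (x s).choose 2 + ∑ s, ∑ t ∈ Ioi s, x s * x t := by
  have hsq : (∑ s, (x s : ℚ)) * ∑ s, (x s : ℚ) =
      ∑ s, (x s : ℚ) * x s + 2 * ∑ s, ∑ t ∈ Ioi s, (x s : ℚ) * x t := by
    simp only [sum_sum_eq_diag_add_Ioi, mul_sum, mul_comm, ← two_mul]
  rw [← Nat.cast_inj (R := ℚ)]
  push_cast [Nat.cast_choose_two]
  rw [← sum_div]
  simp only [mul_sub_one, sum_sub_distrib]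
  linear_combination hsq / 2

theorem alphaConj_eq_sum_nn {l : ℕ} (Λ : Fin l → Ptn) : alphaConj Λ = ∑ s, (Λ s).nn := by
  have htwo (p : Ptn) : ∑ᶠ k, (p.conj k - 1) * p.conj k = 2 * p.nn := by
    rw [finsum_eq_sum_of_support_subset (s := range (p.parts 0)), p.nn_eq_sum_choose le_rfl,
      mul_sum]
    · refine sum_congr rfl fun k _ => ?_
      rw [Nat.choose_two_right, Nat.mul_div_cancel' (Nat.even_mul_pred_self _).two_dvd, mul_comm]
    · intro k hk
      rw [coe_range, Set.mem_Iio, ← not_le, ← Ptn.conj_eq_zero_iff]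
      exact right_ne_zero_of_mul hk
  simp only [alphaConj, htwo, ← mul_sum]
  exact Nat.mul_div_cancel_left _ two_pos

theorem nn_eq_alphaConj_add_sum_conjDot {l : ℕ} (Λ : Fin l → Ptn) (b : Ptn)
    (hb : ∀ k, b.conj k = ∑ s, (Λ s).conj k) :
    b.nn = alphaConj Λ + ∑ s, ∑ t ∈ Ioi s, (Λ s).conjDot (Λ t) := by
  have hB (s : Fin l) : (Λ s).parts 0 ≤ b.parts 0 := by
    rw [← Ptn.conj_eq_zero_iff]
    have hsum : ∑ s, (Λ s).conj (b.parts 0) = 0 := by rw [← hb, Ptn.conj_eq_zero_iff]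
    exact sum_eq_zero_iff.1 hsum s (mem_univ s)
  simp only [b.nn_eq_sum_choose le_rfl, alphaConj_eq_sum_nn, Ptn.nn_eq_sum_choose _ (hB _),
    Ptn.conjDot_eq_sum_mul _ (hB _), hb, choose_two_sum, sum_add_distrib]
  congr 1
  · exact sum_comm
  · rw [sum_comm]
    exact sum_congr rfl fun s _ => sum_comm

variable {K ι : Type*} [Field K] [Fintype ι] {q : K} {Q : ι → K}

theorem prod_finprod_qint_mul_pow (hq : q ≠ 1) (hQ : ∀ s, Q s ≠ 0) (Λ : ι → Ptn) :
    (∏ s, ∏ᶠ i, ∏ j ∈ range ((Λ s).parts i),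
        (Q s * ((q ^ ghook (Λ s) (Λ s) i j - 1) / (q - 1)))) * (q - 1) ^ (∑ s, (Λ s).size) =
      (∏ s, Q s ^ (Λ s).size) * ∏ s, hookProd q (Q s) (Q s) (Λ s) (Λ s) := by
  simp only [Ptn.finprod_rows_eq_prod_cells, ← prod_pow_eq_pow_sum, ← prod_mul_distrib]
  exact prod_congr rfl fun s _ => prod_qint_ghook_mul_pow hq (hQ s) _

theorem prod_finprod_eq_prod_hookProd (q : K) (Q : ι → K) (Λ : ι → Ptn) :
    ∏ s, ∏ᶠ i, ∏ j ∈ range ((Λ s).parts i), ∏ t,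
        (q ^ ghook (Λ s) (Λ t) i j * Q s * (Q t)⁻¹ - 1) =
      ∏ s, ∏ t, hookProd q (Q s) (Q t) (Λ s) (Λ t) := by
  simp only [Ptn.finprod_rows_eq_prod_cells, hookProd]
  exact prod_congr rfl fun s _ => prod_comm

variable [LinearOrder ι] [LocallyFiniteOrderTop ι]

theorem prod_Xst_mul_pow (hq : q ≠ 0) (hQ : ∀ s, Q s ≠ 0)
    (hqQ : Pairwise fun s t => ∀ m : ℤ, q ^ m * Q s ≠ Q t) (Λ : ι → Ptn) :
    (∏ s, ∏ t ∈ Ioi s, Xst q (Q s) (Q t) (Λ s) (Λ t)) *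
        q ^ (∑ s, ∑ t ∈ Ioi s, (Λ s).conjDot (Λ t)) =
      (∏ s, ∏ t ∈ Ioi s, Q t ^ (Λ s).size * Q s ^ (Λ t).size) *
        ∏ s, ∏ t ∈ Ioi s,
          hookProd q (Q s) (Q t) (Λ s) (Λ t) * hookProd q (Q t) (Q s) (Λ t) (Λ s) := by
  simp only [← prod_pow_eq_pow_sum, ← prod_mul_distrib (s := univ),
    ← prod_mul_distrib (s := Ioi _)]
  refine prod_congr rfl fun s _ => prod_congr rfl fun t ht => ?_
  exact Xst_mul_pow_eq_hookProd hq (hQ s) (hQ t) (hqQ (mem_Ioi.1 ht).ne) _ _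

theorem prod_pow_size_mul_prod_Ioi [LocallyFiniteOrderBot ι] (Q : ι → K) (Λ : ι → Ptn) :
    (∏ s, Q s ^ (Λ s).size) * ∏ s, ∏ t ∈ Ioi s, Q t ^ (Λ s).size * Q s ^ (Λ t).size =
      (∏ s, Q s) ^ (∑ s, (Λ s).size) := by
  rw [← prod_prod_eq_diag_mul_Ioi fun s t => Q t ^ (Λ s).size, ← prod_pow_eq_pow_sum]
  exact prod_congr rfl fun s _ => prod_pow _ _ _

end MultiPartitions

theorem stmt6_general {K : Type*} [Field K] {q : K} (hq₀ : q ≠ 0) (hq₁ : q ≠ 1) (l n : ℕ)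
    {Q : Fin l → K} (hQ : ∀ s, Q s ≠ 0) (hqQ : Pairwise fun s t => ∀ m : ℤ, q ^ m * Q s ≠ Q t)
    (Λ : Fin l → Ptn) (hn : ∑ s, (Λ s).size = n)
    (b : Ptn) (hb : ∀ k, b.conj k = ∑ s, (Λ s).conj k) :
    (-1 : K) ^ (n * (l - 1)) * (∏ s, Q s) ^ (-(n : ℤ)) * q ^ (-(alphaConj Λ : ℤ)) *
        (∏ s, ∏ᶠ i, ∏ j ∈ range ((Λ s).parts i),
          (Q s * ((q ^ (ghook (Λ s) (Λ s) i j) - 1) / (q - 1)))) *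
        (∏ s : Fin l, ∏ t ∈ Ioi s, Xst q (Q s) (Q t) (Λ s) (Λ t))
    = (-1 : K) ^ (n * (l - 1)) * q ^ (-(b.nn : ℤ)) * (q - 1) ^ (-(n : ℤ)) *
        ∏ s, ∏ᶠ i, ∏ j ∈ range ((Λ s).parts i), ∏ t : Fin l,
          (q ^ (ghook (Λ s) (Λ t) i j) * Q s * (Q t)⁻¹ - 1) := by
  subst hn
  have hdiag := prod_finprod_qint_mul_pow hq₁ hQ Λ
  have hoff := prod_Xst_mul_pow hq₀ hQ hqQ Λ
  have hpow := prod_pow_size_mul_prod_Ioi Q Λ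
  have hq_sub : q - 1 ≠ 0 := sub_ne_zero.2 hq₁
  have hQ_prod : ∏ s, Q s ≠ 0 := prod_ne_zero_iff.2 fun s _ => hQ s
  rw [prod_finprod_eq_prod_hookProd, nn_eq_alphaConj_add_sum_conjDot Λ b hb,
    prod_prod_eq_diag_mul_Ioi, eq_div_of_mul_eq (pow_ne_zero _ hq_sub) hdiag,
    eq_div_of_mul_eq (pow_ne_zero _ hq₀) hoff, Nat.cast_add, neg_add, zpow_add₀ hq₀]
  simp only [zpow_neg, zpow_natCast]
  field_simp
  rw [← hpow]
  ring

section Indeterminates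

theorem qK_ne_zero (l : ℕ) : qK l ≠ 0 := by
  simp [qK, MvPolynomial.X_ne_zero]

theorem QK_ne_zero (l : ℕ) (s : Fin l) : QK l s ≠ 0 := by
  simp [QK, MvPolynomial.X_ne_zero]

theorem qK_ne_one (l : ℕ) : qK l ≠ 1 := by
  intro h
  rw [qK, map_eq_one_iff _ (IsFractionRing.injective _ _)] at h
  simpa using congrArg (MvPolynomial.eval 0) h

theorem qK_pow_mul_QK_ne {l : ℕ} {s t : Fin l} (h : s ≠ t) (m : ℕ) :
    qK l ^ m * QK l s ≠ QK l t := by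
  intro he
  simp only [qK, QK, ← map_pow, ← map_mul] at he
  have he := IsFractionRing.injective (MvPolynomial (Fin (l + 1)) ℚ) (KK l) he
  have heval := congrArg (MvPolynomial.eval fun i => if i = t.succ then (0 : ℚ) else 1) he
  simp [h, (Fin.succ_ne_zero t).symm] at heval

theorem qK_zpow_mul_QK_ne (l : ℕ) :
    Pairwise fun s t => ∀ m : ℤ, qK l ^ m * QK l s ≠ QK l t := by
  intro s t hst m he
  obtain ⟨n, rfl | rfl⟩ := m.eq_nat_or_neg
  · exact qK_pow_mul_QK_ne hst n (mod_cast he)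
  · refine qK_pow_mul_QK_ne hst.symm n ?_
    rw [← he, zpow_neg, zpow_natCast, mul_inv_cancel_left₀ (pow_ne_zero n (qK_ne_zero l))]

end Indeterminates

/-- Mathas's formula for the Schur element `s_λ(q)` of the Ariki–Koike
algebra equals the cancellation-free formula, in `ℚ(q, Q_0, …, Q_{l-1})`:
`(-1)^{n(l-1)} (Q_0⋯Q_{l-1})^{-n} q^{-α(λ')} ∏_s ∏_{(i,j)∈[λ^s]} Q_s [h^{λ^s,λ^s}_{i,j}]_q
   ∏_{s<t} X(λ^s,λ^t;Q_s,Q_t)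
 = (-1)^{n(l-1)} q^{-n(λ̄)} (q-1)^{-n} ∏_s ∏_{(i,j)∈[λ^s]} ∏_t (q^{h^{λ^s,λ^t}_{i,j}} Q_s Q_t⁻¹ - 1)`,
where `λ̄'_k = Σ_s λ^{s'}_k` characterises the rearrangement `λ̄` and
`[m]_q = (q^m - 1)/(q - 1)`. -/
theorem stmt6 (l n : ℕ) (Λ : Fin l → Ptn) (hn : ∑ s, (Λ s).size = n)
    (b : Ptn) (hb : ∀ k, b.conj k = ∑ s, (Λ s).conj k) :
    (-1 : KK l) ^ (n * (l - 1)) * (∏ s, QK l s) ^ (-(n : ℤ)) *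
        qK l ^ (-(alphaConj Λ : ℤ)) *
        (∏ s, ∏ᶠ i, ∏ j ∈ Finset.range ((Λ s).parts i),
          (QK l s * ((qK l ^ (ghook (Λ s) (Λ s) i j) - 1) / (qK l - 1)))) *
        (∏ s : Fin l, ∏ t ∈ Finset.Ioi s, Xst (qK l) (QK l s) (QK l t) (Λ s) (Λ t))
    = (-1 : KK l) ^ (n * (l - 1)) * qK l ^ (-(b.nn : ℤ)) * (qK l - 1) ^ (-(n : ℤ)) *
        ∏ s, ∏ᶠ i, ∏ j ∈ Finset.range ((Λ s).parts i), ∏ t : Fin l,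
          (qK l ^ (ghook (Λ s) (Λ t) i j) * QK l s * (QK l t)⁻¹ - 1) :=
  stmt6_general (qK_ne_zero l) (qK_ne_one l) l n (QK_ne_zero l) (qK_zpow_mul_QK_ne l) Λ hn b hb
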